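/- arXiv:2307.16594 — 2 statements merged into one kernel-verified Lean document; each statement's English description precedes it below -/
import Mathlib

section
/- (Normalisation by evaluation) Let P and Q be cut-free named GS4 derivations with conclusions ⊢Γ,A and ⊢Γ,Ā respectively, where all elements of the context Γ are atomic named formulas. Then there is a cut-free named GS4 derivation R with conclusion ⊢Γ such that ⟨⟨R⟩⟩ = ⟨⟨P⟩⟩ ⊙_A ⟨⟨Q⟩⟩. -/
open scoped Classical

noncomputable section

namespace GS4

/-- Named classical propositional formulas over atoms `α`, with names in `ℕ`. -/
inductive NForm (α : Type) : Type
  | atom : ℕ → α → NForm α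
  | or   : NForm α → NForm α → NForm α
  | and  : NForm α → NForm α → NForm α

variable {α : Type}

/-- Name-preserving De Morgan negation, w.r.t. an involution `bar` on atoms. -/
def negF (bar : α → α) : NForm α → NForm α
  | .atom x a => .atom x (bar a)
  | .or A B => .and (negF bar A) (negF bar B)
  | .and A B => .or (negF bar A) (negF bar B)

/-- The set of names occurring in a named formula. -/
def NForm.names : NForm α → Set ℕ
  | .atom x _ => {x}
  | .or A B => A.names ∪ B.names
  | .and A B => A.names ∪ B.names

/-- A named formula is sharing-free if every name occurs at most once in it. -/
def NForm.sharingFree : NForm α → Prop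
  | .atom _ _ => True
  | .or A B => A.sharingFree ∧ B.sharingFree ∧ Disjoint A.names B.names
  | .and A B => A.sharingFree ∧ B.sharingFree ∧ Disjoint A.names B.names

def NForm.isAtom : NForm α → Prop
  | .atom _ _ => True
  | _ => False

/-- Anonymous formulas (shapes): `A ≡ B` iff their shapes coincide. -/
inductive Shape (α : Type) : Type
  | atom : α → Shape α
  | or   : Shape α → Shape α → Shape α
  | and  : Shape α → Shape α → Shape α

def NForm.shape : NForm α → Shape α
  | .atom _ a => .atom a
  | .or A B => .or A.shape B.shape
  | .and A B => .and A.shape B.shape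

/-- `HasAtom A x a`: the atomic formula `x:a` occurs in `A`. -/
def HasAtom : NForm α → ℕ → α → Prop
  | .atom y b, x, a => y = x ∧ b = a
  | .or A B, x, a => HasAtom A x a ∨ HasAtom B x a
  | .and A B, x, a => HasAtom A x a ∨ HasAtom B x a

/-- Names of a finite set of named formulas. -/
def snames (Γ : Finset (NForm α)) : Set ℕ := ⋃ A ∈ Γ, A.names

/-- A finite set of named formulas is sharing-free if all its elements are
sharing-free with pairwise disjoint name sets. -/
def SFSet (Γ : Finset (NForm α)) : Prop :=
  (∀ A ∈ Γ, A.sharingFree) ∧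
  ∀ A ∈ Γ, ∀ B ∈ Γ, A ≠ B → Disjoint A.names B.names

/-- `x:a` occurs in some formula of `Γ` (i.e. `Γ[x] = a` for sharing-free `Γ`). -/
def HasAtomS (Γ : Finset (NForm α)) (x : ℕ) (a : α) : Prop :=
  ∃ A ∈ Γ, HasAtom A x a

/-- Branch sets of named formulas. -/
def BrF : NForm α → Set (Set ℕ)
  | .atom x _ => {{x}}
  | .or A B => {X | ∃ Y ∈ BrF A, ∃ Z ∈ BrF B, X = Y ∪ Z}
  | .and A B => BrF A ∪ BrF B

/-- Branch sets of sequents (finite sharing-free sets of named formulas). -/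
def BrS (Γ : Finset (NForm α)) : Set (Set ℕ) :=
  {X | X ⊆ snames Γ ∧ ∀ A ∈ Γ, X ∩ A.names ∈ BrF A}

/-! ## Branch-labeled name graphs -/

/-- A branch-labeled name graph: vertices and a relation between unordered
pairs of vertices and branch labels. -/
structure BLGraph : Type where
  verts : Set ℕ
  rel : Sym2 ℕ → Set ℕ → Prop

/-- Well-formedness of a bl-graph: related pairs consist of distinct vertices,
labels are sets of vertices, and each edge is included in its labels. -/
def BLGraph.IsBL (G : BLGraph) : Prop :=
  ∀ e X, G.rel e X → ¬ e.IsDiag ∧ X ⊆ G.verts ∧ ∀ v ∈ e, v ∈ X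

def BLGraph.Edges (G : BLGraph) : Set (Sym2 ℕ) := {e | ∃ X, G.rel e X}

def BLGraph.Br (G : BLGraph) : Set (Set ℕ) := {X | ∃ e, G.rel e X}

def BLGraph.union (G H : BLGraph) : BLGraph :=
  ⟨G.verts ∪ H.verts, fun e X => G.rel e X ∨ H.rel e X⟩

/-- Restriction `G↾_S` of a bl-graph. -/
def BLGraph.restrict (G : BLGraph) (S : Set ℕ) : BLGraph :=
  ⟨G.verts ∩ S, fun e X => G.rel e X ∧ X ⊆ S⟩

/-- The interface-relativized edge-branch relation `e ⊰^I_G X`. -/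
def BLGraph.relI (G : BLGraph) (I : Set ℕ) (e : Sym2 ℕ) (X : Set ℕ) : Prop :=
  ∃ Y, G.rel e Y ∧ X = Y \ I

/-- `z 0, …, z (n-1)` is an `X`-labeled alternating path between `G` and `H`
through the interface `I`. -/
def AltPath (G H : BLGraph) (I X : Set ℕ) (n : ℕ) (z : ℕ → ℕ) : Prop :=
  1 < n ∧
  (∀ i < n, ∀ j < n, z i = z j → i = j) ∧
  (∀ i, 0 < i → i + 1 < n → z i ∈ I) ∧
  ((∀ i, i + 1 < n →
      (Even i → G.relI I s(z i, z (i + 1)) X) ∧ (¬ Even i → H.relI I s(z i, z (i + 1)) X)) ∨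
   (∀ i, i + 1 < n →
      (Even i → H.relI I s(z i, z (i + 1)) X) ∧ (¬ Even i → G.relI I s(z i, z (i + 1)) X)))

/-- Composition of bl-graphs over an interface `I`. -/
def BLGraph.comp (G H : BLGraph) (I : Set ℕ) : BLGraph :=
  ⟨(G.verts ∪ H.verts) \ I,
   fun e X => ∃ n z, AltPath G H I X n z ∧ z 0 ∉ I ∧ z (n - 1) ∉ I ∧
     e = s(z 0, z (n - 1))⟩

/-- The weakening operator on bl-graphs: add vertices `V` and extend every
branch label by a member of `Brs`. -/
def blwk (V : Set ℕ) (Brs : Set (Set ℕ)) (G : BLGraph) : BLGraph :=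
  ⟨G.verts ∪ V, fun e X => ∃ Y Z, G.rel e Y ∧ Z ∈ Brs ∧ X = Y ∪ Z⟩

/-- The bl-identity graph `id_{A,C}` on a pair of dual formulas. -/
def blid : NForm α → NForm α → BLGraph
  | .atom x _, .atom y _ => ⟨{x, y}, fun e X => e = s(x, y) ∧ X = {x, y}⟩
  | .or A1 A2, .and C1 C2 =>
      (blwk A2.names (BrF A2) (blid A1 C1)).union (blwk A1.names (BrF A1) (blid A2 C2))
  | .and A1 A2, .or C1 C2 =>
      (blwk C2.names (BrF C2) (blid A1 C1)).union (blwk C1.names (BrF C1) (blid A2 C2))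
  | _, _ => ⟨∅, fun _ _ => False⟩

/-! ## Simple name graphs -/

/-- A simple name graph. -/
structure NGraph : Type where
  verts : Set ℕ
  edges : Set (Sym2 ℕ)

/-- Subgraph relation `H ⊑ G`. -/
def NGraph.Sub (H G : NGraph) : Prop := H.verts ⊆ G.verts ∧ H.edges ⊆ G.edges

def NGraph.union (G H : NGraph) : NGraph := ⟨G.verts ∪ H.verts, G.edges ∪ H.edges⟩

/-- Induced subgraph `G↾_S`. -/
def NGraph.restrict (G : NGraph) (S : Set ℕ) : NGraph :=
  ⟨G.verts ∩ S, {e ∈ G.edges | ∀ v ∈ e, v ∈ S}⟩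

/-- Alternating paths between simple name graphs through an interface. -/
def NAltPath (G H : NGraph) (I : Set ℕ) (n : ℕ) (z : ℕ → ℕ) : Prop :=
  0 < n ∧
  (∀ i < n, ∀ j < n, z i = z j → i = j) ∧
  (∀ i, 0 < i → i + 1 < n → z i ∈ I) ∧
  ((∀ i, i + 1 < n →
      (Even i → s(z i, z (i + 1)) ∈ G.edges) ∧ (¬ Even i → s(z i, z (i + 1)) ∈ H.edges)) ∨
   (∀ i, i + 1 < n →
      (Even i → s(z i, z (i + 1)) ∈ H.edges) ∧ (¬ Even i → s(z i, z (i + 1)) ∈ G.edges)))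

/-- Composition of simple name graphs over an interface. -/
def NGraph.comp (G H : NGraph) (I : Set ℕ) : NGraph :=
  ⟨(G.verts ∪ H.verts) \ I,
   {e | ∃ x y, x ≠ y ∧ x ∈ (G.verts ∪ H.verts) \ I ∧ y ∈ (G.verts ∪ H.verts) \ I ∧
        e = s(x, y) ∧ ∃ n z, NAltPath G H I n z ∧ z 0 = x ∧ z (n - 1) = y}⟩

/-- The identity graph `Id_{A,C}` on a pair of dual formulas. -/
def idg : NForm α → NForm α → NGraph
  | .atom x _, .atom y _ => ⟨{x, y}, {s(x, y)}⟩
  | .or A1 A2, .and C1 C2 => (idg A1 C1).union (idg A2 C2)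
  | .and A1 A2, .or C1 C2 => (idg A1 C1).union (idg A2 C2)
  | _, _ => ⟨∅, ∅⟩

/-- The edgeless (weakening) graph on the names of `Γ`. -/
def wkg (Γ : Finset (NForm α)) : NGraph := ⟨snames Γ, ∅⟩

/-! ## Named GS4 derivations -/

/-- Named GS4 derivation trees. -/
inductive Deriv (α : Type) : Type
  | ax (Γ : Finset (NForm α)) (A C : NForm α)
  | cut (A : NForm α) (P Q : Deriv α)
  | sup (P Q : Deriv α)
  | orI (A B : NForm α) (P : Deriv α)
  | andI (A B : NForm α) (P Q : Deriv α)

/-- Conclusion of a derivation tree. -/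
def concl : Deriv α → Finset (NForm α)
  | .ax Γ A C => insert A (insert C Γ)
  | .cut A P _ => (concl P).erase A
  | .sup P _ => concl P
  | .orI A B P => insert (NForm.or A B) (((concl P).erase A).erase B)
  | .andI A B P _ => insert (NForm.and A B) ((concl P).erase A)

/-- Well-formedness of derivation trees w.r.t. the atom involution `bar`:
each rule is applied correctly to sharing-free named sequents. -/
def WF (bar : α → α) : Deriv α → Prop
  | .ax Γ A C =>
      A.shape = (negF bar C).shape ∧
      A.sharingFree ∧ C.sharingFree ∧ SFSet Γ ∧
      Disjoint A.names C.names ∧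
      Disjoint A.names (snames Γ) ∧ Disjoint C.names (snames Γ)
  | .cut A P Q =>
      WF bar P ∧ WF bar Q ∧
      ∃ Γ : Finset (NForm α), A ∉ Γ ∧ negF bar A ∉ Γ ∧
        concl P = insert A Γ ∧ concl Q = insert (negF bar A) Γ ∧
        A.sharingFree ∧ SFSet Γ ∧ Disjoint A.names (snames Γ)
  | .sup P Q => WF bar P ∧ WF bar Q ∧ concl P = concl Q
  | .orI A B P =>
      WF bar P ∧
      ∃ Γ : Finset (NForm α), A ∉ Γ ∧ B ∉ Γ ∧ A ≠ B ∧
        concl P = insert A (insert B Γ) ∧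
        A.sharingFree ∧ B.sharingFree ∧ SFSet Γ ∧
        Disjoint A.names B.names ∧
        Disjoint A.names (snames Γ) ∧ Disjoint B.names (snames Γ)
  | .andI A B P Q =>
      WF bar P ∧ WF bar Q ∧
      ∃ Γ : Finset (NForm α), A ∉ Γ ∧ B ∉ Γ ∧
        concl P = insert A Γ ∧ concl Q = insert B Γ ∧
        A.sharingFree ∧ B.sharingFree ∧ SFSet Γ ∧
        Disjoint A.names B.names ∧
        Disjoint A.names (snames Γ) ∧ Disjoint B.names (snames Γ)

/-- A derivation is cut-free if it contains no cut rule. -/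
def CutFree : Deriv α → Prop
  | .ax _ _ _ => True
  | .cut _ _ _ => False
  | .sup P Q => CutFree P ∧ CutFree Q
  | .orI _ _ P => CutFree P
  | .andI _ _ P Q => CutFree P ∧ CutFree Q

/-- The branch-labeled axiom graph `⟨⟨P⟩⟩` of a derivation. -/
def blaxg : Deriv α → BLGraph
  | .ax Γ A C => blwk (snames Γ) (BrS Γ) (blid A C)
  | .cut A P Q => BLGraph.comp (blaxg P) (blaxg Q) A.names
  | .sup P Q => (blaxg P).union (blaxg Q)
  | .orI _ _ P => blaxg P
  | .andI _ _ P Q => (blaxg P).union (blaxg Q)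

/-- The (simple) axiom graph `⟦P⟧` of a derivation. -/
def axg : Deriv α → NGraph
  | .ax Γ A C => (wkg Γ).union (idg A C)
  | .cut A P Q => NGraph.comp (axg P) (axg Q) A.names
  | .sup P Q => (axg P).union (axg Q)
  | .orI _ _ P => axg P
  | .andI _ _ P Q => (axg P).union (axg Q)

/-! ## Inversion and isolation -/

/-- Inversion of a disjunction `D ∨ E` in the conclusion. -/
def inv (D E : NForm α) : Deriv α → Deriv α
  | .ax Γ A C =>
      if A = NForm.or D E then
        match C with
        | .and C1 C2 =>
            .andI C1 C2 (.ax (insert E Γ) D C1) (.ax (insert D Γ) E C2)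
        | _ => .ax Γ A C
      else if C = NForm.or D E then
        match A with
        | .and A1 A2 =>
            .andI A1 A2 (.ax (insert E Γ) A1 D) (.ax (insert D Γ) A2 E)
        | _ => .ax Γ A C
      else
        .ax (insert D (insert E (Γ.erase (NForm.or D E)))) A C
  | .cut A P Q => .cut A (inv D E P) (inv D E Q)
  | .sup P Q => .sup (inv D E P) (inv D E Q)
  | .orI A B P => if A = D ∧ B = E then P else .orI A B (inv D E P)
  | .andI A B P Q => .andI A B (inv D E P) (inv D E Q)

/-- Left inversion of a conjunction `D ∧ E` in the conclusion. -/
def invl (D E : NForm α) : Deriv α → Deriv α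
  | .ax Γ A C =>
      if A = NForm.and D E then
        match C with
        | .or C1 C2 => .orI C1 C2 (.ax (insert C2 Γ) D C1)
        | _ => .ax Γ A C
      else if C = NForm.and D E then
        match A with
        | .or A1 A2 => .orI A1 A2 (.ax (insert A2 Γ) A1 D)
        | _ => .ax Γ A C
      else
        .ax (insert D (Γ.erase (NForm.and D E))) A C
  | .cut A P Q => .cut A (invl D E P) (invl D E Q)
  | .sup P Q => .sup (invl D E P) (invl D E Q)
  | .orI A B P => .orI A B (invl D E P)
  | .andI A B P Q => if A = D ∧ B = E then P else .andI A B (invl D E P) (invl D E Q)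

/-- Right inversion of a conjunction `D ∧ E` in the conclusion. -/
def invr (D E : NForm α) : Deriv α → Deriv α
  | .ax Γ A C =>
      if A = NForm.and D E then
        match C with
        | .or C1 C2 => .orI C1 C2 (.ax (insert C1 Γ) E C2)
        | _ => .ax Γ A C
      else if C = NForm.and D E then
        match A with
        | .or A1 A2 => .orI A1 A2 (.ax (insert A1 Γ) A2 E)
        | _ => .ax Γ A C
      else
        .ax (insert E (Γ.erase (NForm.and D E))) A C
  | .cut A P Q => .cut A (invr D E P) (invr D E Q)
  | .sup P Q => .sup (invr D E P) (invr D E Q)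
  | .orI A B P => .orI A B (invr D E P)
  | .andI A B P Q => if A = D ∧ B = E then Q else .andI A B (invr D E P) (invr D E Q)

/-- Isolation of a non-atomic formula in the conclusion. -/
def isl : NForm α → Deriv α → Deriv α
  | .or A B, P => .orI A B (inv A B P)
  | .and A B, P => .andI A B (invl A B P) (invr A B P)
  | .atom _ _, P => P

/-- Totality of a bl-graph w.r.t. a sharing-free named sequent. -/
def Total (bar : α → α) (G : BLGraph) (Γ : Finset (NForm α)) : Prop :=
  G.verts = snames Γ ∧
  G.Br = BrS Γ ∧
  ∀ x y : ℕ, s(x, y) ∈ G.Edges →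
    ∀ a b : α, HasAtomS Γ x a → HasAtomS Γ y b → a = bar b

end GS4

namespace GS4

variable {α : Type}

/-! ## Names, atoms and branches -/

theorem names_negF (bar : α → α) (A : NForm α) : (negF bar A).names = A.names := by
  induction A <;> simp_all [negF, NForm.names]

theorem sharingFree_negF (bar : α → α) {A : NForm α} (h : A.sharingFree) :
    (negF bar A).sharingFree := by
  induction A <;> simp_all [negF, NForm.sharingFree, names_negF]

theorem HasAtom.mem_names {A : NForm α} {x : ℕ} {a : α} (h : HasAtom A x a) : x ∈ A.names := by
  induction A <;> simp_all [HasAtom, NForm.names] <;> tauto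

theorem exists_hasAtom {A : NForm α} {x : ℕ} (h : x ∈ A.names) : ∃ a, HasAtom A x a := by
  induction A <;> simp_all [HasAtom, NForm.names, exists_or] <;> tauto

theorem HasAtom.negF (bar : α → α) {A : NForm α} {x : ℕ} {a : α} (h : HasAtom A x a) :
    HasAtom (negF bar A) x (bar a) := by
  induction A <;> simp_all [HasAtom, GS4.negF] <;> tauto

theorem HasAtom.unique {A : NForm α} (hA : A.sharingFree) {x : ℕ} {a b : α}
    (ha : HasAtom A x a) (hb : HasAtom A x b) : a = b := by
  induction A with
  | atom y c => exact ha.2.symm.trans hb.2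
  | or A B ihA ihB | and A B ihA ihB =>
    obtain ⟨h1, h2, h3⟩ := hA
    rcases ha with ha | ha <;> rcases hb with hb | hb
    · exact ihA h1 ha hb
    · exact (Set.disjoint_left.1 h3 ha.mem_names hb.mem_names).elim
    · exact (Set.disjoint_left.1 h3 hb.mem_names ha.mem_names).elim
    · exact ihB h2 ha hb

theorem HasAtomS.unique {Γ : Finset (NForm α)} (hΓ : SFSet Γ) {x : ℕ} {a b : α}
    (ha : HasAtomS Γ x a) (hb : HasAtomS Γ x b) : a = b := by
  obtain ⟨A, hA, ha⟩ := ha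
  obtain ⟨B, hB, hb⟩ := hb
  by_cases h : A = B
  · subst h
    exact ha.unique (hΓ.1 _ hA) hb
  · exact (Set.disjoint_left.1 (hΓ.2 A hA B hB h) ha.mem_names hb.mem_names).elim

theorem hasAtomS_insert {A : NForm α} {Γ : Finset (NForm α)} {x : ℕ} {a : α} :
    HasAtomS (insert A Γ) x a ↔ HasAtom A x a ∨ HasAtomS Γ x a := by
  simp [HasAtomS]

theorem snames_insert (A : NForm α) (Γ : Finset (NForm α)) :
    snames (insert A Γ) = A.names ∪ snames Γ := by
  simp [snames]

theorem SFSet.insert {A : NForm α} {Γ : Finset (NForm α)} (hΓ : SFSet Γ) (hA : A.sharingFree)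
    (hd : Disjoint A.names (snames Γ)) : SFSet (insert A Γ) := by
  have key : ∀ B ∈ Γ, Disjoint A.names B.names := fun B hB =>
    hd.mono_right (Set.subset_biUnion_of_mem (u := fun B : NForm α => B.names) hB)
  refine ⟨by simpa using ⟨hA, hΓ.1⟩, fun B hB C hC hne => ?_⟩
  rw [Finset.mem_insert] at hB hC
  rcases hB with rfl | hB <;> rcases hC with rfl | hC
  · exact (hne rfl).elim
  · exact key C hC
  · exact (key B hB).symm
  · exact hΓ.2 B hB C hC hne

theorem subset_names_of_mem_BrF {A : NForm α} {X : Set ℕ} (h : X ∈ BrF A) : X ⊆ A.names := by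
  induction A generalizing X with
  | atom y c => exact (Set.mem_singleton_iff.1 h).subset
  | or A B ihA ihB =>
    obtain ⟨Y, hY, Z, hZ, rfl⟩ := h
    exact Set.union_subset_union (ihA hY) (ihB hZ)
  | and A B ihA ihB =>
    rcases h with h | h
    · exact (ihA h).trans Set.subset_union_left
    · exact (ihB h).trans Set.subset_union_right

theorem mem_BrS_insert {A : NForm α} {Γ : Finset (NForm α)} (hd : Disjoint A.names (snames Γ))
    {X : Set ℕ} : X ∈ BrS (insert A Γ) ↔ ∃ Y ∈ BrF A, ∃ Z ∈ BrS Γ, X = Y ∪ Z := by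
  have hsub : ∀ B ∈ Γ, B.names ⊆ snames Γ := fun B hB =>
    Set.subset_biUnion_of_mem (u := fun B : NForm α => B.names) hB
  constructor
  · rintro ⟨hX, h⟩
    refine ⟨X ∩ A.names, h A (by simp), X ∩ snames Γ, ⟨Set.inter_subset_right, ?_⟩, ?_⟩
    · intro B hB
      rw [Set.inter_assoc, Set.inter_eq_right.2 (hsub B hB)]
      exact h B (by simp [hB])
    · rw [snames_insert] at hX
      rw [← Set.inter_union_distrib_left, Set.inter_eq_left.2 hX]
  · rintro ⟨Y, hY, Z, ⟨hZ, h⟩, rfl⟩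
    have hYA := subset_names_of_mem_BrF hY
    refine ⟨?_, ?_⟩
    · rw [snames_insert]
      exact Set.union_subset_union hYA hZ
    · have hself : (Y ∪ Z) ∩ A.names = Y := by
        rw [Set.union_inter_distrib_right, Set.inter_eq_left.2 hYA,
          (hd.symm.mono_left hZ).inter_eq, Set.union_empty]
      intro B hB
      rcases Finset.mem_insert.1 hB with rfl | hB
      · rwa [hself]
      · rw [Set.union_inter_distrib_right, ((hd.mono_left hYA).mono_right (hsub B hB)).inter_eq,
          Set.empty_union]
        exact h B hB

theorem mem_BrS_insert_or {A B : NForm α} {Γ : Finset (NForm α)} (hAB : Disjoint A.names B.names)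
    (hA : Disjoint A.names (snames Γ)) (hB : Disjoint B.names (snames Γ)) {X : Set ℕ} :
    X ∈ BrS (insert (.or A B) Γ) ↔ X ∈ BrS (insert A (insert B Γ)) := by
  rw [mem_BrS_insert (by simpa [NForm.names] using ⟨hA, hB⟩),
    mem_BrS_insert (by simpa [snames_insert] using ⟨hAB, hA⟩)]
  constructor
  · rintro ⟨_, ⟨Y, hY, Y', hY', rfl⟩, Z, hZ, rfl⟩
    exact ⟨Y, hY, Y' ∪ Z, (mem_BrS_insert hB).2 ⟨Y', hY', Z, hZ, rfl⟩, Set.union_assoc ..⟩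
  · rintro ⟨Y, hY, _, h, rfl⟩
    obtain ⟨Y', hY', Z, hZ, rfl⟩ := (mem_BrS_insert hB).1 h
    exact ⟨Y ∪ Y', ⟨Y, hY, Y', hY', rfl⟩, Z, hZ, (Set.union_assoc ..).symm⟩

theorem mem_BrS_insert_and {A B : NForm α} {Γ : Finset (NForm α)}
    (hA : Disjoint A.names (snames Γ)) (hB : Disjoint B.names (snames Γ)) {X : Set ℕ} :
    X ∈ BrS (insert (.and A B) Γ) ↔ X ∈ BrS (insert A Γ) ∨ X ∈ BrS (insert B Γ) := by
  rw [mem_BrS_insert (by simpa [NForm.names] using ⟨hA, hB⟩), mem_BrS_insert hA,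
    mem_BrS_insert hB, ← exists_or]
  simp only [BrF, Set.mem_union, or_and_right]

theorem mem_BrS_iff_of_atomic {Γ : Finset (NForm α)} (h : ∀ F ∈ Γ, F.isAtom) {X : Set ℕ} :
    X ∈ BrS Γ ↔ X = snames Γ := by
  have hF : ∀ F ∈ Γ, BrF F = {F.names} := by
    intro F hF
    cases F with
    | atom x a => rfl
    | or A B | and A B => exact (h _ hF).elim
  constructor
  · rintro ⟨h1, h2⟩
    refine h1.antisymm (Set.iUnion₂_subset fun F hFΓ => ?_)
    have := h2 F hFΓ
    rw [hF F hFΓ] at this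
    exact Set.inter_eq_right.1 this
  · rintro rfl
    refine ⟨subset_rfl, fun F hFΓ => ?_⟩
    rw [hF F hFΓ]
    exact Set.inter_eq_right.2
      (Set.subset_biUnion_of_mem (u := fun B : NForm α => B.names) (show F ∈ Γ from hFΓ))

/-- Determinacy of formula evaluation: either `S` contains a branch of `A`, or it avoids a branch
of the negation of `A`. -/
theorem exists_branch_subset_or_disjoint (bar : α → α) (A : NForm α) (S : Set ℕ) :
    (∃ X ∈ BrF A, X ⊆ S) ∨ ∃ Y ∈ BrF (negF bar A), Disjoint Y S := by
  induction A with
  | atom x a =>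
    by_cases h : x ∈ S
    · exact .inl ⟨{x}, rfl, by simpa⟩
    · exact .inr ⟨{x}, rfl, by simpa⟩
  | or A B ihA ihB =>
    rcases ihA with ⟨X, hX, hXS⟩ | ⟨Y, hY, hYS⟩
    · rcases ihB with ⟨X', hX', hXS'⟩ | ⟨Y, hY, hYS⟩
      · exact .inl ⟨X ∪ X', ⟨X, hX, X', hX', rfl⟩, Set.union_subset hXS hXS'⟩
      · exact .inr ⟨Y, .inr hY, hYS⟩
    · exact .inr ⟨Y, .inl hY, hYS⟩
  | and A B ihA ihB =>
    rcases ihA with ⟨X, hX, hXS⟩ | ⟨Y, hY, hYS⟩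
    · exact .inl ⟨X, .inl hX, hXS⟩
    · rcases ihB with ⟨X, hX, hXS⟩ | ⟨Y', hY', hYS'⟩
      · exact .inl ⟨X, .inr hX, hXS⟩
      · exact .inr ⟨Y ∪ Y', ⟨Y, hY, Y', hY', rfl⟩, by simpa using ⟨hYS, hYS'⟩⟩

/-! ## Axiom graphs of cut-free derivations -/

theorem verts_blid (bar : α → α) {A C : NForm α} (h : A.shape = (negF bar C).shape) :
    (blid A C).verts = A.names ∪ C.names := by
  induction A generalizing C with
  | atom x a => cases C <;> simp_all [negF, NForm.shape, blid, NForm.names, -Set.union_singleton, Set.singleton_union]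
  | or A B ihA ihB | and A B ihA ihB =>
    cases C with
    | atom | and | or =>
      first
      | simp [negF, NForm.shape] at h; done
      | simp only [negF, NForm.shape, Shape.or.injEq, Shape.and.injEq] at h
        simp only [blid, BLGraph.union, blwk, ihA h.1, ihB h.2, NForm.names]
        ext x
        simp only [Set.mem_union]
        tauto

theorem rel_blid_branch (bar : α → α) {A C : NForm α} (h : A.shape = (negF bar C).shape)
    {X : Set ℕ} :
    (∃ e, (blid A C).rel e X) ↔ ∃ Y ∈ BrF A, ∃ Z ∈ BrF C, X = Y ∪ Z := by
  induction A generalizing C X with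
  | atom x a => cases C <;> simp_all [negF, NForm.shape, blid, BrF, -Set.union_singleton, Set.singleton_union]
  | or A B ihA ihB =>
    cases C with
    | atom | or => simp [negF, NForm.shape] at h
    | and C D =>
      simp only [negF, NForm.shape, Shape.or.injEq] at h
      have ihA := fun X => ihA h.1 (X := X)
      have ihB := fun X => ihB h.2 (X := X)
      constructor
      · rintro ⟨e, ⟨U, V, hU, hV, rfl⟩ | ⟨U, V, hU, hV, rfl⟩⟩
        · obtain ⟨Y, hY, Z, hZ, rfl⟩ := (ihA U).1 ⟨e, hU⟩
          exact ⟨Y ∪ V, ⟨Y, hY, V, hV, rfl⟩, Z, .inl hZ, Set.union_right_comm ..⟩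
        · obtain ⟨Y, hY, Z, hZ, rfl⟩ := (ihB U).1 ⟨e, hU⟩
          refine ⟨V ∪ Y, ⟨V, hV, Y, hY, rfl⟩, Z, .inr hZ, ?_⟩
          rw [Set.union_comm, Set.union_assoc]
      · rintro ⟨_, ⟨Y, hY, Y', hY', rfl⟩, Z, hZ | hZ, rfl⟩
        · obtain ⟨e, he⟩ := (ihA _).2 ⟨Y, hY, Z, hZ, rfl⟩
          exact ⟨e, .inl ⟨_, Y', he, hY', Set.union_right_comm ..⟩⟩
        · obtain ⟨e, he⟩ := (ihB _).2 ⟨Y', hY', Z, hZ, rfl⟩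
          refine ⟨e, .inr ⟨_, Y, he, hY, ?_⟩⟩
          rw [Set.union_assoc, Set.union_comm]
  | and A B ihA ihB =>
    cases C with
    | atom | and => simp [negF, NForm.shape] at h
    | or C D =>
      simp only [negF, NForm.shape, Shape.and.injEq] at h
      have ihA := fun X => ihA h.1 (X := X)
      have ihB := fun X => ihB h.2 (X := X)
      constructor
      · rintro ⟨e, ⟨U, V, hU, hV, rfl⟩ | ⟨U, V, hU, hV, rfl⟩⟩
        · obtain ⟨Y, hY, Z, hZ, rfl⟩ := (ihA U).1 ⟨e, hU⟩
          exact ⟨Y, .inl hY, Z ∪ V, ⟨Z, hZ, V, hV, rfl⟩, Set.union_assoc ..⟩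
        · obtain ⟨Y, hY, Z, hZ, rfl⟩ := (ihB U).1 ⟨e, hU⟩
          refine ⟨Y, .inr hY, V ∪ Z, ⟨V, hV, Z, hZ, rfl⟩, ?_⟩
          rw [Set.union_assoc, Set.union_comm V]
      · rintro ⟨Y, hY | hY, _, ⟨Z, hZ, Z', hZ', rfl⟩, rfl⟩
        · obtain ⟨e, he⟩ := (ihA _).2 ⟨Y, hY, Z, hZ, rfl⟩
          exact ⟨e, .inl ⟨_, Z', he, hZ', (Set.union_assoc ..).symm⟩⟩
        · obtain ⟨e, he⟩ := (ihB _).2 ⟨Y, hY, Z', hZ', rfl⟩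
          refine ⟨e, .inr ⟨_, Z, he, hZ, ?_⟩⟩
          rw [Set.union_assoc, Set.union_comm Z]

/-- The edges of a bl-identity lie in their labels and link names of dual atoms. -/
theorem rel_blid_edge {bar : α → α} (hbar : Function.Involutive bar) {A C : NForm α}
    (h : A.shape = (negF bar C).shape) {p : ℕ → α} (hA : ∀ x a, HasAtom A x a → p x = a)
    (hC : ∀ x a, HasAtom C x a → p x = a) {x y : ℕ} {X : Set ℕ}
    (hrel : (blid A C).rel s(x, y) X) : x ∈ X ∧ y ∈ X ∧ p x = bar (p y) := by
  induction A generalizing C X with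
  | atom u a =>
    cases C with
    | or | and => simp [negF, NForm.shape] at h
    | atom v c =>
      obtain ⟨he, rfl⟩ := hrel
      have hu : p u = a := hA u a ⟨rfl, rfl⟩
      have hv : p v = c := hC v c ⟨rfl, rfl⟩
      simp only [negF, NForm.shape, Shape.atom.injEq] at h
      rcases Sym2.eq_iff.1 he with ⟨rfl, rfl⟩ | ⟨rfl, rfl⟩
      · simp [hu, hv, h]
      · simp [hu, hv, h, hbar c]
  | or A B ihA ihB | and A B ihA ihB =>
    cases C with
    | atom | and | or =>
      first
      | simp [negF, NForm.shape] at h; done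
      | simp only [negF, NForm.shape, Shape.or.injEq, Shape.and.injEq] at h
        rcases hrel with ⟨U, V, hU, -, rfl⟩ | ⟨U, V, hU, -, rfl⟩
        · obtain ⟨h1, h2, h3⟩ := ihA h.1 (fun x a hx => hA x a (.inl hx))
            (fun x a hx => hC x a (.inl hx)) hU
          exact ⟨.inl h1, .inl h2, h3⟩
        · obtain ⟨h1, h2, h3⟩ := ihB h.2 (fun x a hx => hA x a (.inr hx))
            (fun x a hx => hC x a (.inr hx)) hU
          exact ⟨.inl h1, .inl h2, h3⟩

theorem concl_orI {A B : NForm α} {Γ : Finset (NForm α)} {P : Deriv α} (hA : A ∉ Γ) (hB : B ∉ Γ)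
    (hAB : A ≠ B) (h : concl P = insert A (insert B Γ)) :
    concl (.orI A B P) = insert (.or A B) Γ := by
  rw [concl, h, Finset.erase_insert (by simp [hA, hAB]), Finset.erase_insert hB]

theorem concl_andI {A B : NForm α} {Γ : Finset (NForm α)} {P Q : Deriv α} (hA : A ∉ Γ)
    (h : concl P = insert A Γ) : concl (.andI A B P Q) = insert (.and A B) Γ := by
  rw [concl, h, Finset.erase_insert hA]

theorem verts_blaxg {bar : α → α} {P : Deriv α} (hP : WF bar P) (hcf : CutFree P) :
    (blaxg P).verts = snames (concl P) := by
  induction P with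
  | ax Γ A C =>
    simp only [blaxg, blwk, concl, snames_insert, verts_blid bar hP.1, Set.union_assoc]
  | cut => exact hcf.elim
  | sup P Q ihP ihQ =>
    obtain ⟨h1, h2, h3⟩ := hP
    simp only [blaxg, BLGraph.union, concl, ihP h1 hcf.1, ihQ h2 hcf.2, h3, Set.union_self]
  | orI A B P ih =>
    obtain ⟨h1, Γ, hA, hB, hAB, hc, -⟩ := hP
    simp only [blaxg, ih h1 hcf, concl_orI hA hB hAB hc, hc, snames_insert, NForm.names,
      Set.union_assoc]
  | andI A B P Q ihP ihQ =>
    obtain ⟨h1, h2, Γ, hA, hB, hcP, hcQ, -⟩ := hP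
    simp only [blaxg, BLGraph.union, ihP h1 hcf.1, ihQ h2 hcf.2, concl_andI hA hcP, hcP, hcQ,
      snames_insert, NForm.names, ← Set.union_union_distrib_right]

/-- The labels of the bl-axiom graph of a cut-free derivation are exactly the branches of its
conclusion. -/
theorem rel_blaxg_branch {bar : α → α} {P : Deriv α} (hP : WF bar P) (hcf : CutFree P)
    {X : Set ℕ} : (∃ e, (blaxg P).rel e X) ↔ X ∈ BrS (concl P) := by
  induction P with
  | ax Γ A C =>
    obtain ⟨hs, -, -, -, hAC, hA, hC⟩ := hP
    rw [concl, mem_BrS_insert (by simpa [snames_insert] using ⟨hAC, hA⟩)]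
    constructor
    · rintro ⟨e, U, V, hU, hV, rfl⟩
      obtain ⟨Y, hY, Z, hZ, rfl⟩ := (rel_blid_branch bar hs).1 ⟨e, hU⟩
      exact ⟨Y, hY, Z ∪ V, (mem_BrS_insert hC).2 ⟨Z, hZ, V, hV, rfl⟩, Set.union_assoc ..⟩
    · rintro ⟨Y, hY, _, h, rfl⟩
      obtain ⟨Z, hZ, V, hV, rfl⟩ := (mem_BrS_insert hC).1 h
      obtain ⟨e, he⟩ := (rel_blid_branch bar hs).2 ⟨Y, hY, Z, hZ, rfl⟩
      exact ⟨e, _, V, he, hV, (Set.union_assoc ..).symm⟩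
  | cut => exact hcf.elim
  | sup P Q ihP ihQ =>
    obtain ⟨h1, h2, h3⟩ := hP
    have hQ := ihQ h2 hcf.2
    rw [← h3, ← ihP h1 hcf.1] at hQ
    simp only [blaxg, BLGraph.union, exists_or, hQ, or_self, concl, ihP h1 hcf.1]
  | orI A B P ih =>
    obtain ⟨h1, Γ, hA, hB, hAB, hc, -, -, -, dAB, dA, dB⟩ := hP
    rw [concl_orI hA hB hAB hc, mem_BrS_insert_or dAB dA dB, ← hc]
    exact ih h1 hcf
  | andI A B P Q ihP ihQ =>
    obtain ⟨h1, h2, Γ, hA, hB, hcP, hcQ, -, -, -, -, dA, dB⟩ := hP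
    rw [concl_andI hA hcP, mem_BrS_insert_and dA dB, ← hcP, ← hcQ, ← ihP h1 hcf.1,
      ← ihQ h2 hcf.2, ← exists_or]
    rfl

/-- The edges of the bl-axiom graph of a cut-free derivation lie in their labels and link names of
dual atoms of the conclusion. -/
theorem rel_blaxg_edge {bar : α → α} (hbar : Function.Involutive bar) {P : Deriv α}
    (hP : WF bar P) (hcf : CutFree P) {p : ℕ → α}
    (hp : ∀ x a, HasAtomS (concl P) x a → p x = a) {x y : ℕ} {X : Set ℕ}
    (hrel : (blaxg P).rel s(x, y) X) : x ∈ X ∧ y ∈ X ∧ p x = bar (p y) := by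
  induction P generalizing X with
  | ax Γ A C =>
    obtain ⟨U, V, hU, -, rfl⟩ := hrel
    simp only [concl, hasAtomS_insert] at hp
    obtain ⟨h1, h2, h3⟩ := rel_blid_edge hbar hP.1 (fun x a h => hp x a (.inl h))
      (fun x a h => hp x a (.inr (.inl h))) hU
    exact ⟨.inl h1, .inl h2, h3⟩
  | cut => exact hcf.elim
  | sup P Q ihP ihQ =>
    obtain ⟨h1, h2, h3⟩ := hP
    rcases hrel with h | h
    · exact ihP h1 hcf.1 hp h
    · exact ihQ h2 hcf.2 (h3 ▸ hp) h
  | orI A B P ih =>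
    obtain ⟨h1, Γ, hA, hB, hAB, hc, -⟩ := hP
    refine ih h1 hcf (fun x a h => hp x a ?_) hrel
    rw [hc, hasAtomS_insert, hasAtomS_insert, ← or_assoc] at h
    rw [concl_orI hA hB hAB hc, hasAtomS_insert]
    exact h
  | andI A B P Q ihP ihQ =>
    obtain ⟨h1, h2, Γ, hA, hB, hcP, hcQ, -⟩ := hP
    rw [concl_andI hA hcP] at hp
    simp only [hasAtomS_insert] at hp
    rcases hrel with h | h
    · refine ihP h1 hcf.1 (fun x a h => hp x a ?_) h
      rw [hcP, hasAtomS_insert] at h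
      exact h.imp_left .inl
    · refine ihQ h2 hcf.2 (fun x a h => hp x a ?_) h
      rw [hcQ, hasAtomS_insert] at h
      exact h.imp_left .inr

theorem exists_atom_labelling {Γ : Finset (NForm α)} (hΓ : SFSet Γ) (a₀ : α) :
    ∃ p : ℕ → α, ∀ x a, HasAtomS Γ x a → p x = a := by
  refine ⟨fun x => if h : ∃ a, HasAtomS Γ x a then h.choose else a₀, fun x a h => ?_⟩
  have h' : ∃ a, HasAtomS Γ x a := ⟨a, h⟩
  simp only [dif_pos h']
  exact h'.choose_spec.unique hΓ h

/-! ## Alternating paths -/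

/-- The colour of the `i`-th edge of an alternating path whose first edge has colour `b`. -/
def altColor (b : Bool) (i : ℕ) : Bool := if Even i then b else !b

theorem altColor_zero (b : Bool) : altColor b 0 = b := by simp [altColor]

theorem altColor_succ (b : Bool) (i : ℕ) : altColor b (i + 1) = !altColor b i := by
  by_cases h : Even i <;> simp [altColor, Nat.even_add_one, h]

/-- `p true` and `p false` label the vertices of two edge relations `E true` and `E false` by
atoms so that edges link dual atoms, where the two labellings agree on `N` and are dual on `I`. -/
structure DualLabelling (bar : α → α) (E : Bool → ℕ → ℕ → Prop) (N I : Set ℕ)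
    (p : Bool → ℕ → α) : Prop where
  symm : ∀ {b x y}, E b x y → E b y x
  edge : ∀ {b x y}, E b x y → p b x = bar (p b y)
  agree : ∀ {b x}, x ∈ N → p (!b) x = p b x
  dual : ∀ {b x}, x ∈ I → p (!b) x = bar (p b x)
  disj : Disjoint N I

/-- `AltReach E N I b y`: an alternating walk through `I` leads from `N` to `y`, its last edge
having colour `b`. -/
inductive AltReach (E : Bool → ℕ → ℕ → Prop) (N I : Set ℕ) : Bool → ℕ → Prop
  | start {b x y} : x ∈ N → E b x y → y ∈ I → AltReach E N I b y
  | step {b x y} : AltReach E N I b x → E (!b) x y → y ∈ I → AltReach E N I (!b) y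

theorem AltReach.mem {E : Bool → ℕ → ℕ → Prop} {N I : Set ℕ} {b : Bool} {y : ℕ}
    (h : AltReach E N I b y) : y ∈ I := by
  cases h <;> assumption

section

variable {bar : α → α} {E : Bool → ℕ → ℕ → Prop} {N I : Set ℕ} {p : Bool → ℕ → α}

theorem DualLabelling.label_succ (h : DualLabelling bar E N I p) (hbar : Function.Involutive bar)
    {b : Bool} {n : ℕ} {z : ℕ → ℕ} (hI : ∀ i, 0 < i → i < n → z i ∈ I)
    (hE : ∀ i < n, E (altColor b i) (z i) (z (i + 1))) {i : ℕ} (hi : i < n) :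
    p (altColor b i) (z (i + 1)) = bar (p b (z 0)) := by
  induction i with
  | zero =>
    have := h.edge (h.symm (hE 0 hi))
    simpa [altColor_zero] using this
  | succ i ih =>
    rw [h.edge (h.symm (hE (i + 1) hi)), altColor_succ, h.dual (hI (i + 1) (by omega) hi),
      ih (by omega), hbar]

/-- Alternating walks can be shortened to alternating paths, since by duality of labels a vertex is
always entered through the same colour. -/
theorem AltReach.exists_path (h : DualLabelling bar E N I p) (hbar : Function.Involutive bar)
    (hfix : ∀ a, bar a ≠ a) {b : Bool} {y : ℕ} (hy : AltReach E N I b y) :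
    ∃ (c : Bool) (n : ℕ) (z : ℕ → ℕ), altColor c n = b ∧ z 0 ∈ N ∧ z (n + 1) = y ∧
      Set.InjOn z (Set.Iic (n + 1)) ∧ (∀ i, 0 < i → i ≤ n + 1 → z i ∈ I) ∧
      ∀ i ≤ n, E (altColor c i) (z i) (z (i + 1)) := by
  induction hy with
  | @start b x y hx hxy hy =>
    have hne : x ≠ y := fun e => Set.disjoint_left.1 h.disj hx (e ▸ hy)
    refine ⟨b, 0, fun i => if i = 0 then x else y, altColor_zero b, by simpa, by simp, ?_, ?_, ?_⟩
    · intro i hi j hj hij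
      simp only [zero_add, Set.mem_Iic] at hi hj
      dsimp only at hij
      split_ifs at hij
      · omega
      · exact (hne hij).elim
      · exact (hne hij.symm).elim
      · omega
    · intro i hi _
      simpa [hi.ne'] using hy
    · intro i hi
      obtain rfl : i = 0 := by omega
      simpa [altColor_zero] using hxy
  | @step b x y hx hxy hy ih =>
    obtain ⟨c, n, z, hc, h0, hn, hinj, hI, hE⟩ := ih
    by_cases hmem : ∃ i ≤ n + 1, z i = y
    · obtain ⟨i, hi, rfl⟩ := hmem
      obtain _ | i := i
      · exact (Set.disjoint_left.1 h.disj h0 hy).elim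
      refine ⟨c, i, z, ?_, h0, rfl, hinj.mono (Set.Iic_subset_Iic.2 hi),
        fun j hj hji => hI j hj (hji.trans hi), fun j hj => hE j (by omega)⟩
      by_contra hne
      have hci : altColor c i = b := by
        cases hb : altColor c i <;> cases b <;> simp_all
      have key {j : ℕ} (hj : j < n + 1) := h.label_succ hbar (n := n + 1)
        (fun i hi hin => hI i hi hin.le) (fun i hi => hE i (by omega)) hj
      have h1 := key (show i < n + 1 by omega)
      have h2 := key (show n < n + 1 by omega)
      rw [hc, hn] at h2
      rw [hci] at h1
      have h3 := h.edge (h.symm hxy)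
      rw [h.dual hy, h.dual hx.mem, h1, h2, hbar] at h3
      exact hfix _ h3.symm
    · push Not at hmem
      refine ⟨c, n + 1, fun i => if i ≤ n + 1 then z i else y, by rw [altColor_succ, hc],
        by simpa, by simp, ?_, ?_, ?_⟩
      · intro i hi j hj hij
        simp only [Set.mem_Iic] at hi hj
        dsimp only at hij
        split_ifs at hij with h1 h2 h2
        · exact hinj h1 h2 hij
        · exact (hmem i h1 hij).elim
        · exact (hmem j h2 hij.symm).elim
        · omega
      · intro i hi _
        dsimp only
        split_ifs with h1
        · exact hI i hi h1
        · exact hy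
      · intro i hi
        rcases hi.lt_or_eq with hi | rfl
        · simpa [show i ≤ n + 1 by omega, show i ≤ n by omega] using hE i (by omega)
        · simpa [altColor_succ, hc, hn] using hxy

/-- An alternating path of length at least one with both ends in `N` and interior in `I`. -/
def CompletePath (E : Bool → ℕ → ℕ → Prop) (N I : Set ℕ) (b : Bool) (n : ℕ) (z : ℕ → ℕ) : Prop :=
  z 0 ∈ N ∧ z (n + 1) ∈ N ∧ Set.InjOn z (Set.Iic (n + 1)) ∧
    (∀ i, 0 < i → i ≤ n → z i ∈ I) ∧ ∀ i ≤ n, E (altColor b i) (z i) (z (i + 1))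

theorem CompletePath.label_last {b : Bool} {n : ℕ} {z : ℕ → ℕ} (hz : CompletePath E N I b n z)
    (h : DualLabelling bar E N I p) (hbar : Function.Involutive bar) :
    p true (z 0) = bar (p true (z (n + 1))) := by
  obtain ⟨h0, h1, -, hI, hE⟩ := hz
  have hN : ∀ (b : Bool) {x}, x ∈ N → p b x = p true x := by
    rintro (_ | _) x hx
    · exact h.agree (b := true) hx
    · rfl
  have := h.label_succ hbar (n := n + 1) (fun i hi hin => hI i hi (by omega))
    (fun i hi => hE i (by omega)) (Nat.lt_succ_self n)
  rw [hN _ h1, hN _ h0] at this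
  rw [this, hbar]

theorem exists_completePath_of_edge (h : DualLabelling bar E N I p) (hfix : ∀ a, bar a ≠ a)
    {b : Bool} {x y : ℕ} (hx : x ∈ N) (hy : y ∈ N) (hxy : E b x y) :
    ∃ b n z, CompletePath E N I b n z := by
  have hne : x ≠ y := by
    rintro rfl
    exact hfix _ (h.edge hxy).symm
  refine ⟨b, 0, fun i => if i = 0 then x else y, by simpa, by simpa, ?_, ?_, ?_⟩
  · intro i hi j hj hij
    simp only [zero_add, Set.mem_Iic] at hi hj
    dsimp only at hij
    split_ifs at hij
    · omega
    · exact (hne hij).elim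
    · exact (hne hij.symm).elim
    · omega
  · intro i hi hi'
    omega
  · intro i hi
    obtain rfl : i = 0 := by omega
    simpa [altColor_zero] using hxy

theorem AltReach.exists_completePath (h : DualLabelling bar E N I p)
    (hbar : Function.Involutive bar) (hfix : ∀ a, bar a ≠ a) {b : Bool} {x y : ℕ}
    (hx : AltReach E N I b x) (hxy : E (!b) x y) (hy : y ∈ N) :
    ∃ b n z, CompletePath E N I b n z := by
  obtain ⟨c, n, z, hc, h0, hn, hinj, hI, hE⟩ := hx.exists_path h hbar hfix
  have hmem : ∀ i ≤ n + 1, z i ≠ y := by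
    rintro (_ | i) hi rfl
    · have h1 := h.label_succ hbar (n := n + 1) (fun i hi hin => hI i hi hin.le)
        (fun i hi => hE i (by omega)) (Nat.lt_succ_self n)
      have h2 := h.edge (h.symm hxy)
      have hN : ∀ d : Bool, p d (z 0) = p true (z 0) := by
        rintro (_ | _)
        · exact h.agree (b := true) h0
        · rfl
      rw [hc, hn, hN c] at h1
      rw [h.dual hx.mem, hbar, h1, hN] at h2
      exact hfix _ h2.symm
    · exact Set.disjoint_left.1 h.disj hy (hI _ (by omega) hi)
  refine ⟨c, n + 1, fun i => if i ≤ n + 1 then z i else y, by simpa, by simpa, ?_, ?_, ?_⟩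
  · intro i hi j hj hij
    simp only [Set.mem_Iic] at hi hj
    dsimp only at hij
    split_ifs at hij with h1 h2 h2
    · exact hinj h1 h2 hij
    · exact (hmem i h1 hij).elim
    · exact (hmem j h2 hij.symm).elim
    · omega
  · intro i hi h1
    simpa [h1] using hI i hi h1
  · intro i hi
    rcases hi.lt_or_eq with hi | rfl
    · simpa [show i ≤ n + 1 by omega, show i ≤ n by omega] using hE i (by omega)
    · simpa [altColor_succ, hc, hn] using hxy

theorem AltReach.exists_completePath_of_both (h : DualLabelling bar E N I p)
    (hbar : Function.Involutive bar) (hfix : ∀ a, bar a ≠ a) {b : Bool} {y : ℕ}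
    (h1 : AltReach E N I b y) (h2 : AltReach E N I (!b) y) :
    ∃ b n z, CompletePath E N I b n z := by
  induction h1 with
  | start hx hxy hy => exact h2.exists_completePath h hbar hfix (by simpa using h.symm hxy) hx
  | @step b x y hx hxy hy ih =>
    refine ih ?_
    have := h2.step (y := x) (by simpa using h.symm hxy) hx.mem
    simpa using this

theorem exists_valuation (hbar : Function.Involutive bar) (hfix : ∀ a, bar a ≠ a) :
    ∃ v : α → Prop, ∀ a, v (bar a) ↔ ¬ v a := by
  refine ⟨fun a => WellOrderingRel a (bar a), fun a => ?_⟩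
  simp only [hbar a]
  constructor
  · exact fun h h' => asymm_of WellOrderingRel h h'
  · intro h
    rcases trichotomous_of WellOrderingRel a (bar a) with h' | h' | h'
    · exact (h h').elim
    · exact (hfix a h'.symm).elim
    · exact h'

/-- If every branch of `A` contains an edge of colour `true` and every branch of the negation of
`A` contains an edge of colour `false`, both up to the context `N`, then some alternating path
through the names of `A` is complete. -/
theorem exists_completePath {A : NForm α} (h : DualLabelling bar E N A.names p)
    (hbar : Function.Involutive bar) (hfix : ∀ a, bar a ≠ a)
    (hG : ∀ X ∈ BrF A, ∃ x ∈ N ∪ X, ∃ y ∈ N ∪ X, E true x y)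
    (hH : ∀ X ∈ BrF (negF bar A), ∃ x ∈ N ∪ X, ∃ y ∈ N ∪ X, E false x y) :
    ∃ b n z, CompletePath E N A.names b n z := by
  obtain ⟨v, hv⟩ := exists_valuation hbar hfix
  by_contra hcon
  let R := AltReach E N A.names
  have hNN : ∀ {b x y}, x ∈ N → y ∈ N → ¬ E b x y := fun hx hy hxy =>
    hcon (exists_completePath_of_edge h hfix hx hy hxy)
  have hboth : ∀ {x}, R true x → ¬ R false x := fun h1 h2 =>
    hcon (h1.exists_completePath_of_both h hbar hfix h2)
  let S : Set ℕ := {z | R false z ∨ (¬ R true z ∧ v (p true z))}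
  rcases exists_branch_subset_or_disjoint bar A S with ⟨X, hX, hXS⟩ | ⟨X, hX, hXS⟩
  · have hXI := subset_names_of_mem_BrF hX
    have hS : ∀ {y}, y ∈ X → ¬ R true y := fun hy hR => by
      rcases hXS hy with h' | h'
      · exact hboth hR h'
      · exact h'.1 hR
    obtain ⟨x, hx, y, hy, hxy⟩ := hG X hX
    rcases hx with hx | hx <;> rcases hy with hy | hy
    · exact hNN hx hy hxy
    · exact hS hy (.start hx hxy (hXI hy))
    · exact hS hx (.start hy (h.symm hxy) (hXI hx))
    · rcases hXS hx with hx' | ⟨-, hx'⟩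
      · exact hS hy (AltReach.step (b := false) hx' hxy (hXI hy))
      rcases hXS hy with hy' | ⟨-, hy'⟩
      · exact hS hx (AltReach.step (b := false) hy' (h.symm hxy) (hXI hx))
      rw [h.edge hxy, hv] at hx'
      exact hx' hy'
  · have hXI := (subset_names_of_mem_BrF hX).trans (names_negF bar A).subset
    have hS : ∀ {y}, y ∈ X → ¬ R false y := fun hy hR =>
      Set.disjoint_left.1 hXS hy (.inl hR)
    have hR : ∀ {x}, x ∈ X → v (p true x) → R true x := fun {x} hx hvx => by
      by_contra hRx
      exact Set.disjoint_left.1 hXS hx (.inr ⟨hRx, hvx⟩)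
    obtain ⟨x, hx, y, hy, hxy⟩ := hH X hX
    rcases hx with hx | hx <;> rcases hy with hy | hy
    · exact hNN hx hy hxy
    · exact hS hy (.start hx hxy (hXI hy))
    · exact hS hx (.start hy (h.symm hxy) (hXI hx))
    · by_cases hvy : v (p true y)
      · exact hS hx (AltReach.step (b := true) (hR hy hvy) (h.symm hxy) (hXI hx))
      · refine hS hy (AltReach.step (b := true) (hR hx ?_) hxy (hXI hy))
        have := h.edge hxy
        rw [← hbar.injective.eq_iff, ← h.dual (hXI hx), ← h.dual (hXI hy)] at this
        simp only [Bool.not_false] at this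
        rw [this, hv]
        exact hvy

end

/-! ## Derivations of atomic sequents -/

theorem exists_deriv_of_edge {bar : α → α} (hbar : Function.Involutive bar)
    (hfix : ∀ a, bar a ≠ a) {Γ : Finset (NForm α)} (hΓ : SFSet Γ) (hatomic : ∀ F ∈ Γ, F.isAtom)
    {x y : ℕ} {a : α} (hx : NForm.atom x a ∈ Γ) (hy : NForm.atom y (bar a) ∈ Γ) :
    ∃ R : Deriv α, WF bar R ∧ CutFree R ∧ concl R = Γ ∧
      ∀ e X, (blaxg R).rel e X ↔ e = s(x, y) ∧ X = snames Γ := by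
  have hne : NForm.atom x a ≠ NForm.atom y (bar a) := by
    intro e
    injection e with _ e
    exact hfix a e.symm
  obtain ⟨Δ, hΔ⟩ : ∃ Δ, Δ = (Γ.erase (.atom x a)).erase (.atom y (bar a)) := ⟨_, rfl⟩
  have hΔΓ : insert (.atom x a) (insert (.atom y (bar a)) Δ) = Γ := by
    rw [hΔ, Finset.insert_erase (Finset.mem_erase.2 ⟨hne.symm, hy⟩), Finset.insert_erase hx]
  have hsub : ∀ F ∈ Δ, F ∈ Γ ∧ F ≠ .atom x a ∧ F ≠ .atom y (bar a) := by
    intro F hF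
    simp only [hΔ, Finset.mem_erase] at hF
    tauto
  have hd : ∀ A ∈ Γ, A ∉ Δ → Disjoint A.names (snames Δ) := by
    intro A hA hAΔ
    refine Set.disjoint_iUnion₂_right.2 fun F hF => hΓ.2 A hA F (hsub F hF).1 ?_
    rintro rfl
    exact hAΔ hF
  refine ⟨.ax Δ (.atom x a) (.atom y (bar a)), ?_, trivial, hΔΓ, fun e X => ?_⟩
  · exact ⟨by simp [NForm.shape, negF, hbar a], trivial, trivial,
      ⟨fun F hF => hΓ.1 F (hsub F hF).1, fun F hF G hG => hΓ.2 F (hsub F hF).1 G (hsub G hG).1⟩,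
      hΓ.2 _ hx _ hy hne, hd _ hx fun h => (hsub _ h).2.1 rfl, hd _ hy fun h => (hsub _ h).2.2 rfl⟩
  · have hBr : ∀ Z, Z ∈ BrS Δ ↔ Z = snames Δ := fun Z =>
      mem_BrS_iff_of_atomic fun F hF => hatomic F (hsub F hF).1
    have hnames : snames Γ = {x, y} ∪ snames Δ := by
      rw [← hΔΓ, snames_insert, snames_insert, ← Set.union_assoc]
      rfl
    simp only [blaxg, blwk, blid, hBr, hnames]
    constructor
    · rintro ⟨Y, Z, ⟨rfl, rfl⟩, rfl, rfl⟩
      exact ⟨rfl, rfl⟩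
    · rintro ⟨rfl, rfl⟩
      exact ⟨_, _, ⟨rfl, rfl⟩, rfl, rfl⟩

theorem exists_deriv_of_edges {bar : α → α} (hbar : Function.Involutive bar)
    (hfix : ∀ a, bar a ≠ a) {Γ : Finset (NForm α)} (hΓ : SFSet Γ) (hatomic : ∀ F ∈ Γ, F.isAtom)
    {s : Finset (Sym2 ℕ)} (hs : s.Nonempty)
    (hdual : ∀ e ∈ s, ∃ x y a, e = s(x, y) ∧ NForm.atom x a ∈ Γ ∧ NForm.atom y (bar a) ∈ Γ) :
    ∃ R : Deriv α, WF bar R ∧ CutFree R ∧ concl R = Γ ∧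
      ∀ e X, (blaxg R).rel e X ↔ e ∈ s ∧ X = snames Γ := by
  induction hs using Finset.Nonempty.cons_induction with
  | singleton e =>
    obtain ⟨x, y, a, rfl, hx, hy⟩ := hdual e (by simp)
    simpa using exists_deriv_of_edge hbar hfix hΓ hatomic hx hy
  | cons e s he hs ih =>
    obtain ⟨x, y, a, rfl, hx, hy⟩ := hdual e (by simp)
    obtain ⟨R, hR, hcf, hc, hrel⟩ := exists_deriv_of_edge hbar hfix hΓ hatomic hx hy
    obtain ⟨R', hR', hcf', hc', hrel'⟩ := ih fun e h => hdual e (by simp [h])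
    refine ⟨.sup R R', ⟨hR, hR', hc.trans hc'.symm⟩, ⟨hcf, hcf'⟩, hc, fun f X => ?_⟩
    simp only [blaxg, BLGraph.union, hrel, hrel', Finset.mem_cons, or_and_right]

theorem mem_of_hasAtomS_of_atomic {Γ : Finset (NForm α)} (hatomic : ∀ F ∈ Γ, F.isAtom) {x : ℕ}
    {a : α} (h : HasAtomS Γ x a) : NForm.atom x a ∈ Γ := by
  obtain ⟨F, hF, h⟩ := h
  cases F with
  | atom y b =>
    obtain ⟨rfl, rfl⟩ := h
    exact hF
  | or | and => exact (hatomic _ hF).elim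

theorem exists_hasAtomS {Γ : Finset (NForm α)} {x : ℕ} (h : x ∈ snames Γ) :
    ∃ a, HasAtomS Γ x a := by
  obtain ⟨F, hF, hx⟩ := Set.mem_iUnion₂.1 h
  obtain ⟨a, ha⟩ := exists_hasAtom hx
  exact ⟨a, F, hF, ha⟩

theorem finite_names (A : NForm α) : A.names.Finite := by
  induction A <;> simp_all [NForm.names]

theorem finite_snames (Γ : Finset (NForm α)) : (snames Γ).Finite :=
  Γ.finite_toSet.biUnion fun A _ => finite_names A

theorem NForm.nonempty_atoms (A : NForm α) : Nonempty α := by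
  induction A with
  | atom _ a => exact ⟨a⟩
  | or _ _ ih _ | and _ _ ih _ => exact ih

/-- Complete alternating paths between two bl-graphs all of whose labels restrict to `N` outside
the interface. -/
theorem rel_comp_iff {G H : BLGraph} {E : Bool → ℕ → ℕ → Prop} {N I : Set ℕ}
    (hdisj : Disjoint N I) (hEG : ∀ x y, E true x y ↔ ∃ Y, G.rel s(x, y) Y)
    (hEH : ∀ x y, E false x y ↔ ∃ Y, H.rel s(x, y) Y)
    (hE : ∀ b x y, E b x y → x ∈ N ∪ I ∧ y ∈ N ∪ I)
    (hG : ∀ e Y, G.rel e Y → Y \ I = N) (hH : ∀ e Y, H.rel e Y → Y \ I = N)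
    {e : Sym2 ℕ} {X : Set ℕ} :
    (G.comp H I).rel e X ↔
      X = N ∧ ∃ b n z, CompletePath E N I b n z ∧ e = s(z 0, z (n + 1)) := by
  have hrelG : ∀ x y X, G.relI I s(x, y) X ↔ E true x y ∧ X = N := by
    intro x y X
    rw [hEG]
    exact ⟨fun ⟨Y, hY, hX⟩ => ⟨⟨Y, hY⟩, hX.trans (hG _ _ hY)⟩,
      fun ⟨⟨Y, hY⟩, hX⟩ => ⟨Y, hY, hX.trans (hG _ _ hY).symm⟩⟩
  have hrelH : ∀ x y X, H.relI I s(x, y) X ↔ E false x y ∧ X = N := by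
    intro x y X
    rw [hEH]
    exact ⟨fun ⟨Y, hY, hX⟩ => ⟨⟨Y, hY⟩, hX.trans (hH _ _ hY)⟩,
      fun ⟨⟨Y, hY⟩, hX⟩ => ⟨Y, hY, hX.trans (hH _ _ hY).symm⟩⟩
  simp only [BLGraph.comp, AltPath, hrelG, hrelH]
  constructor
  · rintro ⟨n, z, ⟨hn, hinj, hI, hedge⟩, h0, h1, rfl⟩
    obtain ⟨n, rfl⟩ : ∃ m, n = m + 2 := ⟨n - 2, by omega⟩
    simp only [show n + 2 - 1 = n + 1 by omega] at h1 ⊢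
    obtain ⟨b, hb⟩ : ∃ b, ∀ i ≤ n, E (altColor b i) (z i) (z (i + 1)) ∧ X = N := by
      rcases hedge with h | h
      · refine ⟨true, fun i hi => ?_⟩
        by_cases he : Even i
        · simpa [altColor, he] using (h i (by omega)).1 he
        · simpa [altColor, he] using (h i (by omega)).2 he
      · refine ⟨false, fun i hi => ?_⟩
        by_cases he : Even i
        · simpa [altColor, he] using (h i (by omega)).1 he
        · simpa [altColor, he] using (h i (by omega)).2 he
    refine ⟨(hb 0 (by omega)).2, b, n, z, ⟨?_, ?_, ?_, ?_, fun i hi => (hb i hi).1⟩, rfl⟩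
    · exact (hE _ _ _ (hb 0 (by omega)).1).1.resolve_right h0
    · exact (hE _ _ _ (hb n le_rfl).1).2.resolve_right h1
    · intro i hi j hj hij
      simp only [Set.mem_Iic] at hi hj
      exact hinj i (by omega) j (by omega) hij
    · exact fun i hi hin => hI i hi (by omega)
  · rintro ⟨rfl, b, n, z, ⟨h0, h1, hinj, hI, hedge⟩, rfl⟩
    refine ⟨n + 2, z, ⟨by omega, fun i hi j hj => ?_, fun i hi hin => hI i hi (by omega), ?_⟩,
      Set.disjoint_left.1 hdisj h0, Set.disjoint_left.1 hdisj h1, rfl⟩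
    · exact hinj (Set.mem_Iic.2 (by omega)) (Set.mem_Iic.2 (by omega))
    · cases b
      · refine .inr fun i hi => ?_
        have hi' := hedge i (by omega)
        exact ⟨fun he => ⟨by simpa [altColor, he] using hi', rfl⟩,
          fun he => ⟨by simpa [altColor, he] using hi', rfl⟩⟩
      · refine .inl fun i hi => ?_
        have hi' := hedge i (by omega)
        exact ⟨fun he => ⟨by simpa [altColor, he] using hi', rfl⟩,
          fun he => ⟨by simpa [altColor, he] using hi', rfl⟩⟩

theorem diff_eq_of_mem_BrS_insert {A : NForm α} {Γ : Finset (NForm α)}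
    (hatomic : ∀ F ∈ Γ, F.isAtom) (hd : Disjoint A.names (snames Γ)) {X : Set ℕ}
    (hX : X ∈ BrS (insert A Γ)) : X \ A.names = snames Γ := by
  obtain ⟨Y, hY, Z, hZ, rfl⟩ := (mem_BrS_insert hd).1 hX
  rw [mem_BrS_iff_of_atomic hatomic] at hZ
  rw [hZ, Set.union_sdiff_distrib, Set.sdiff_eq_empty.2 (subset_names_of_mem_BrF hY),
    Set.empty_union, hd.symm.sdiff_eq_left]

theorem exists_edge_of_branch {bar : α → α} (hbar : Function.Involutive bar) {P : Deriv α}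
    (hP : WF bar P) (hcf : CutFree P) {p : ℕ → α} (hp : ∀ x a, HasAtomS (concl P) x a → p x = a)
    {A : NForm α} {Γ : Finset (NForm α)} (hc : concl P = insert A Γ)
    (hatomic : ∀ F ∈ Γ, F.isAtom) (hd : Disjoint A.names (snames Γ)) {X : Set ℕ}
    (hX : X ∈ BrF A) :
    ∃ x ∈ snames Γ ∪ X, ∃ y ∈ snames Γ ∪ X, ∃ Y, (blaxg P).rel s(x, y) Y := by
  have hmem : snames Γ ∪ X ∈ BrS (concl P) := by
    rw [hc, mem_BrS_insert hd]
    exact ⟨X, hX, _, (mem_BrS_iff_of_atomic hatomic).2 rfl, Set.union_comm ..⟩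
  obtain ⟨e, he⟩ := (rel_blaxg_branch hP hcf).2 hmem
  induction e with
  | h x y =>
    obtain ⟨hx, hy, -⟩ := rel_blaxg_edge hbar hP hcf hp he
    exact ⟨x, hx, y, hy, _, he⟩

end GS4

/-- Normalisation by evaluation: cuts between cut-free
derivations with atomic context can be evaluated to a cut-free derivation
with the same composite bl-axiom graph. -/
theorem GS4.normalisation_by_evaluation {α : Type} (bar : α → α)
    (hbar : Function.Involutive bar) (hfix : ∀ a, bar a ≠ a)
    (Γ : Finset (GS4.NForm α)) (A : GS4.NForm α)
    (hΓ : GS4.SFSet Γ) (hatomic : ∀ F ∈ Γ, F.isAtom)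
    (hA : A.sharingFree) (hd : Disjoint A.names (GS4.snames Γ))
    (hAΓ : A ∉ Γ) (hAΓ' : GS4.negF bar A ∉ Γ)
    (P Q : GS4.Deriv α) (hP : GS4.WF bar P) (hQ : GS4.WF bar Q)
    (hcfP : GS4.CutFree P) (hcfQ : GS4.CutFree Q)
    (hcP : GS4.concl P = insert A Γ)
    (hcQ : GS4.concl Q = insert (GS4.negF bar A) Γ) :
    ∃ R : GS4.Deriv α, GS4.WF bar R ∧ GS4.CutFree R ∧ GS4.concl R = Γ ∧
      GS4.blaxg R = (GS4.blaxg P).comp (GS4.blaxg Q) A.names := by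
  obtain ⟨a₀⟩ := A.nonempty_atoms
  have hd' : Disjoint (negF bar A).names (snames Γ) := by rwa [names_negF]
  obtain ⟨p, hp⟩ := exists_atom_labelling (hΓ.insert hA hd) a₀
  obtain ⟨q, hq⟩ := exists_atom_labelling (hΓ.insert (sharingFree_negF bar hA) hd') a₀
  have hagree : ∀ x ∈ snames Γ, q x = p x := by
    intro x hx
    obtain ⟨a, ha⟩ := exists_hasAtomS hx
    rw [hp x a (hasAtomS_insert.2 (.inr ha)), hq x a (hasAtomS_insert.2 (.inr ha))]
  have hdual : ∀ x ∈ A.names, q x = bar (p x) := by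
    intro x hx
    obtain ⟨a, ha⟩ := exists_hasAtom hx
    rw [hp x a (hasAtomS_insert.2 (.inl ha)),
      hq x (bar a) (hasAtomS_insert.2 (.inl (ha.negF bar)))]
  have hpP : ∀ x a, HasAtomS (concl P) x a → p x = a := hcP ▸ hp
  have hqQ : ∀ x a, HasAtomS (concl Q) x a → q x = a := hcQ ▸ hq
  let E : Bool → ℕ → ℕ → Prop := fun b x y =>
    ∃ Y, (blaxg (if b then P else Q)).rel s(x, y) Y
  have hlabel : DualLabelling bar E (snames Γ) A.names fun b => if b then p else q := by
    refine ⟨?_, ?_, ?_, ?_, hd.symm⟩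
    · rintro b x y ⟨Y, hY⟩
      exact ⟨Y, Sym2.eq_swap ▸ hY⟩
    · rintro (_ | _) x y ⟨Y, hY⟩
      · exact (rel_blaxg_edge hbar hQ hcfQ hqQ hY).2.2
      · exact (rel_blaxg_edge hbar hP hcfP hpP hY).2.2
    · rintro (_ | _) x hx
      · exact (hagree x hx).symm
      · exact hagree x hx
    · rintro (_ | _) x hx
      · simp [hdual x hx, hbar (p x)]
      · exact hdual x hx
  have hmemP : ∀ {e Y}, (blaxg P).rel e Y → Y ∈ BrS (insert A Γ) := fun h =>
    hcP ▸ (rel_blaxg_branch hP hcfP).1 ⟨_, h⟩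
  have hmemQ : ∀ {e Y}, (blaxg Q).rel e Y → Y ∈ BrS (insert (negF bar A) Γ) := fun h =>
    hcQ ▸ (rel_blaxg_branch hQ hcfQ).1 ⟨_, h⟩
  have hEN : ∀ b x y, E b x y → x ∈ snames Γ ∪ A.names ∧ y ∈ snames Γ ∪ A.names := by
    rintro (_ | _) x y ⟨Y, hY⟩
    · obtain ⟨hx, hy, -⟩ := rel_blaxg_edge hbar hQ hcfQ hqQ hY
      have hsub := (hmemQ hY).1
      rw [snames_insert, names_negF, Set.union_comm] at hsub
      exact ⟨hsub hx, hsub hy⟩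
    · obtain ⟨hx, hy, -⟩ := rel_blaxg_edge hbar hP hcfP hpP hY
      have hsub := (hmemP hY).1
      rw [snames_insert, Set.union_comm] at hsub
      exact ⟨hsub hx, hsub hy⟩
  have hcomp : ∀ e X, ((blaxg P).comp (blaxg Q) A.names).rel e X ↔ X = snames Γ ∧
      ∃ b n z, CompletePath E (snames Γ) A.names b n z ∧ e = s(z 0, z (n + 1)) := fun e X =>
    rel_comp_iff hd.symm (fun _ _ => Iff.rfl) (fun _ _ => Iff.rfl) hEN
      (fun _ _ h => diff_eq_of_mem_BrS_insert hatomic hd (hmemP h))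
      (fun _ _ h => names_negF bar A ▸ diff_eq_of_mem_BrS_insert hatomic hd' (hmemQ h))
  let T : Set (Sym2 ℕ) :=
    {e | ∃ b n z, CompletePath E (snames Γ) A.names b n z ∧ e = s(z 0, z (n + 1))}
  have hT : T.Finite := by
    refine (((finite_snames Γ).prod (finite_snames Γ)).image fun u => s(u.1, u.2)).subset ?_
    rintro _ ⟨b, n, z, hz, rfl⟩
    exact ⟨(z 0, z (n + 1)), ⟨hz.1, hz.2.1⟩, rfl⟩
  have hTne : hT.toFinset.Nonempty := by
    obtain ⟨b, n, z, hz⟩ := exists_completePath hlabel hbar hfix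
      (fun X hX => exists_edge_of_branch hbar hP hcfP hpP hcP hatomic hd hX)
      (fun X hX => exists_edge_of_branch hbar hQ hcfQ hqQ hcQ hatomic hd' hX)
    exact ⟨s(z 0, z (n + 1)), hT.mem_toFinset.2 ⟨b, n, z, hz, rfl⟩⟩
  obtain ⟨R, hR, hcfR, hcR, hrel⟩ := exists_deriv_of_edges hbar hfix hΓ hatomic hTne (by
    intro e he
    obtain ⟨b, n, z, hz, rfl⟩ := hT.mem_toFinset.1 he
    have hlast : p (z 0) = bar (p (z (n + 1))) := hz.label_last hlabel hbar
    have hmem : ∀ x ∈ snames Γ, NForm.atom x (p x) ∈ Γ := by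
      intro x hx
      obtain ⟨a, ha⟩ := exists_hasAtomS hx
      rw [hp x a (hasAtomS_insert.2 (.inr ha))]
      exact mem_of_hasAtomS_of_atomic hatomic ha
    exact ⟨z (n + 1), z 0, p (z (n + 1)), Sym2.eq_swap, hmem _ hz.2.1, hlast ▸ hmem _ hz.1⟩)
  refine ⟨R, hR, hcfR, hcR, ?_⟩
  have hverts : (blaxg R).verts = ((blaxg P).comp (blaxg Q) A.names).verts := by
    simp only [BLGraph.comp, verts_blaxg hR hcfR, verts_blaxg hP hcfP, verts_blaxg hQ hcfQ, hcR,
      hcP, hcQ, snames_insert, names_negF, Set.union_self, Set.union_sdiff_left,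
      hd.symm.sdiff_eq_left]
  have hrels : (blaxg R).rel = ((blaxg P).comp (blaxg Q) A.names).rel := by
    ext e X
    rw [hrel, hcomp, hT.mem_toFinset, and_comm]
    rfl
  exact congrArg₂ BLGraph.mk hverts hrels
end
end

section
/- Let P be any named GS4 derivation with conclusion ⊢Γ,A, where A is any non-atomic named formula. Then the axiom graph of the isolation of A in P is a subgraph of the axiom graph of P: ⟦isl(P,A)⟧ ⊑ ⟦P⟧. -/
open scoped Classical

noncomputable section

namespace GS4

variable {α : Type}

theorem NGraph.Sub.refl (G : NGraph) : G.Sub G := ⟨subset_rfl, subset_rfl⟩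

theorem NGraph.Sub.trans {G H K : NGraph} (h : G.Sub H) (h' : H.Sub K) : G.Sub K :=
  ⟨h.1.trans h'.1, h.2.trans h'.2⟩

theorem NGraph.sub_union_left (G H : NGraph) : G.Sub (G.union H) :=
  ⟨Set.subset_union_left, Set.subset_union_left⟩

theorem NGraph.sub_union_right (G H : NGraph) : H.Sub (G.union H) :=
  ⟨Set.subset_union_right, Set.subset_union_right⟩

theorem NGraph.union_sub {G H K : NGraph} (hG : G.Sub K) (hH : H.Sub K) : (G.union H).Sub K :=
  ⟨Set.union_subset hG.1 hH.1, Set.union_subset hG.2 hH.2⟩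

theorem NGraph.Sub.union {G H G' H' : NGraph} (hG : G.Sub G') (hH : H.Sub H') :
    (G.union H).Sub (G'.union H') :=
  ⟨Set.union_subset_union hG.1 hH.1, Set.union_subset_union hG.2 hH.2⟩

theorem NAltPath.mono {G H G' H' : NGraph} (hG : G.Sub G') (hH : H.Sub H') {I : Set ℕ} {n : ℕ}
    {z : ℕ → ℕ} (h : NAltPath G H I n z) : NAltPath G' H' I n z := by
  obtain ⟨hpos, hinj, hI, hedges⟩ := h
  refine ⟨hpos, hinj, hI, hedges.imp ?_ ?_⟩
  · exact fun h i hi => ⟨fun hev => hG.2 ((h i hi).1 hev), fun hod => hH.2 ((h i hi).2 hod)⟩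
  · exact fun h i hi => ⟨fun hev => hH.2 ((h i hi).1 hev), fun hod => hG.2 ((h i hi).2 hod)⟩

/-- Composition over a fixed interface is monotone. -/
theorem NGraph.Sub.comp {G H G' H' : NGraph} (hG : G.Sub G') (hH : H.Sub H') (I : Set ℕ) :
    (G.comp H I).Sub (G'.comp H' I) := by
  have hV : (G.verts ∪ H.verts) \ I ⊆ (G'.verts ∪ H'.verts) \ I :=
    Set.sdiff_subset_sdiff_left (Set.union_subset_union hG.1 hH.1)
  refine ⟨hV, ?_⟩
  rintro e ⟨x, y, hxy, hx, hy, rfl, n, z, hz, h0, h1⟩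
  exact ⟨x, y, hxy, hV hx, hV hy, rfl, n, z, hz.mono hG hH, h0, h1⟩

theorem names_subset_snames {A : NForm α} {Γ : Finset (NForm α)} (h : A ∈ Γ) :
    A.names ⊆ snames Γ :=
  Set.subset_biUnion_of_mem (u := NForm.names) h

theorem snames_mono {Γ Δ : Finset (NForm α)} (h : Γ ⊆ Δ) : snames Γ ⊆ snames Δ :=
  Set.biUnion_subset_biUnion_left h

/-- The identity graph on dual formulas has all their names as vertices. -/
theorem idg_verts (bar : α → α) (A C : NForm α) (h : A.shape = (negF bar C).shape) :
    (idg A C).verts = A.names ∪ C.names := by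
  induction A generalizing C with
  | atom x a =>
    cases C <;> simp only [NForm.shape, negF, reduceCtorEq] at h
    rfl
  | or A B ihA ihB | and A B ihA ihB =>
    cases C with
    | atom y b => simp [NForm.shape, negF] at h
    | or C D | and C D =>
      simp only [NForm.shape, negF, Shape.or.injEq, Shape.and.injEq, reduceCtorEq] at h
      try simp only [idg, NGraph.union, NForm.names, ihA C h.1, ihB D h.2,
        Set.union_union_union_comm]

theorem axg_ax_sub {Γ : Finset (NForm α)} {A C : NForm α} {G : NGraph}
    (hΓ : snames Γ ⊆ G.verts) (h : (idg A C).Sub G) : (axg (.ax Γ A C)).Sub G :=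
  NGraph.union_sub ⟨hΓ, Set.empty_subset _⟩ h

theorem idg_sub_axg_ax (Γ : Finset (NForm α)) (A C : NForm α) :
    (idg A C).Sub (axg (.ax Γ A C)) := NGraph.sub_union_right _ _

theorem axg_ax_verts (bar : α → α) {Γ : Finset (NForm α)} {A C : NForm α}
    (h : A.shape = (negF bar C).shape) :
    (axg (.ax Γ A C)).verts = snames Γ ∪ (A.names ∪ C.names) := by
  rw [← idg_verts bar A C h]; rfl

theorem axg_inv_sub (bar : α → α) (D E : NForm α) (P : Deriv α) (hP : WF bar P)
    (h : NForm.or D E ∈ concl P) : (axg (inv D E P)).Sub (axg P) := by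
  induction P with
  | ax Γ A C =>
    have hV := axg_ax_verts bar (Γ := Γ) hP.1
    have hid := idg_sub_axg_ax Γ A C
    have hs := hP.1
    unfold inv
    split_ifs with hA hC
    · subst hA
      cases C <;> simp only [NForm.shape, negF, reduceCtorEq] at hs
      refine NGraph.union_sub (axg_ax_sub ?_ ((NGraph.sub_union_left _ _).trans hid))
        (axg_ax_sub ?_ ((NGraph.sub_union_right _ _).trans hid)) <;>
      · rw [hV, snames_insert, NForm.names]; grind
    · subst hC
      cases A <;> simp only [NForm.shape, negF, reduceCtorEq] at hs
      refine NGraph.union_sub (axg_ax_sub ?_ ((NGraph.sub_union_left _ _).trans hid))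
        (axg_ax_sub ?_ ((NGraph.sub_union_right _ _).trans hid)) <;>
      · rw [hV, snames_insert, NForm.names, NForm.names]; grind
    · have hmem : NForm.or D E ∈ Γ := by simp only [concl, Finset.mem_insert] at h; grind
      have hn := names_subset_snames hmem
      have he := snames_mono (Γ.erase_subset (NForm.or D E))
      refine axg_ax_sub ?_ hid
      rw [hV, snames_insert, snames_insert]
      rw [NForm.names] at hn; grind
  | cut A P Q ihP ihQ =>
    obtain ⟨hwP, hwQ, Γ, -, -, hcP, hcQ, -⟩ := hP
    simp only [concl, hcP, Finset.mem_erase, Finset.mem_insert] at h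
    exact (ihP hwP (by grind)).comp (ihQ hwQ (by grind)) _
  | sup P Q ihP ihQ =>
    obtain ⟨hwP, hwQ, hc⟩ := hP
    exact (ihP hwP h).union (ihQ hwQ (hc ▸ h))
  | orI A B P ih =>
    unfold inv
    split_ifs with hAB
    · exact NGraph.Sub.refl _
    · simp only [concl, Finset.mem_insert, Finset.mem_erase, NForm.or.injEq] at h
      exact ih hP.1 (by grind)
  | andI A B P Q ihP ihQ =>
    obtain ⟨hwP, hwQ, Γ, -, -, hcP, hcQ, -⟩ := hP
    simp only [concl, hcP, Finset.mem_insert, Finset.mem_erase, reduceCtorEq, false_or] at h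
    exact (ihP hwP (by grind)).union (ihQ hwQ (by grind))

theorem axg_invl_sub (bar : α → α) (D E : NForm α) (P : Deriv α) (hP : WF bar P)
    (h : NForm.and D E ∈ concl P) : (axg (invl D E P)).Sub (axg P) := by
  induction P with
  | ax Γ A C =>
    have hV := axg_ax_verts bar (Γ := Γ) hP.1
    have hid := idg_sub_axg_ax Γ A C
    have hs := hP.1
    unfold invl
    split_ifs with hA hC
    · subst hA
      cases C <;> simp only [NForm.shape, negF, reduceCtorEq] at hs
      refine axg_ax_sub ?_ ((NGraph.sub_union_left _ _).trans hid)
      rw [hV, snames_insert, NForm.names, NForm.names]; grind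
    · subst hC
      cases A <;> simp only [NForm.shape, negF, reduceCtorEq] at hs
      refine axg_ax_sub ?_ ((NGraph.sub_union_left _ _).trans hid)
      rw [hV, snames_insert, NForm.names, NForm.names]; grind
    · have hmem : NForm.and D E ∈ Γ := by simp only [concl, Finset.mem_insert] at h; grind
      have hn := names_subset_snames hmem
      have he := snames_mono (Γ.erase_subset (NForm.and D E))
      refine axg_ax_sub ?_ hid
      rw [hV, snames_insert]
      rw [NForm.names] at hn; grind
  | cut A P Q ihP ihQ =>
    obtain ⟨hwP, hwQ, Γ, -, -, hcP, hcQ, -⟩ := hP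
    simp only [concl, hcP, Finset.mem_erase, Finset.mem_insert] at h
    exact (ihP hwP (by grind)).comp (ihQ hwQ (by grind)) _
  | sup P Q ihP ihQ =>
    obtain ⟨hwP, hwQ, hc⟩ := hP
    exact (ihP hwP h).union (ihQ hwQ (hc ▸ h))
  | orI A B P ih =>
    simp only [concl, Finset.mem_insert, Finset.mem_erase, reduceCtorEq, false_or] at h
    exact ih hP.1 h.2.2
  | andI A B P Q ihP ihQ =>
    obtain ⟨hwP, hwQ, Γ, -, -, hcP, hcQ, -⟩ := hP
    unfold invl
    split_ifs with hAB
    · exact NGraph.sub_union_left _ _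
    · simp only [concl, hcP, Finset.mem_insert, Finset.mem_erase, NForm.and.injEq] at h
      exact (ihP hwP (by grind)).union (ihQ hwQ (by grind))

theorem axg_invr_sub (bar : α → α) (D E : NForm α) (P : Deriv α) (hP : WF bar P)
    (h : NForm.and D E ∈ concl P) : (axg (invr D E P)).Sub (axg P) := by
  induction P with
  | ax Γ A C =>
    have hV := axg_ax_verts bar (Γ := Γ) hP.1
    have hid := idg_sub_axg_ax Γ A C
    have hs := hP.1
    unfold invr
    split_ifs with hA hC
    · subst hA
      cases C <;> simp only [NForm.shape, negF, reduceCtorEq] at hs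
      refine axg_ax_sub ?_ ((NGraph.sub_union_right _ _).trans hid)
      rw [hV, snames_insert, NForm.names, NForm.names]; grind
    · subst hC
      cases A <;> simp only [NForm.shape, negF, reduceCtorEq] at hs
      refine axg_ax_sub ?_ ((NGraph.sub_union_right _ _).trans hid)
      rw [hV, snames_insert, NForm.names, NForm.names]; grind
    · have hmem : NForm.and D E ∈ Γ := by simp only [concl, Finset.mem_insert] at h; grind
      have hn := names_subset_snames hmem
      have he := snames_mono (Γ.erase_subset (NForm.and D E))
      refine axg_ax_sub ?_ hid
      rw [hV, snames_insert]
      rw [NForm.names] at hn; grind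
  | cut A P Q ihP ihQ =>
    obtain ⟨hwP, hwQ, Γ, -, -, hcP, hcQ, -⟩ := hP
    simp only [concl, hcP, Finset.mem_erase, Finset.mem_insert] at h
    exact (ihP hwP (by grind)).comp (ihQ hwQ (by grind)) _
  | sup P Q ihP ihQ =>
    obtain ⟨hwP, hwQ, hc⟩ := hP
    exact (ihP hwP h).union (ihQ hwQ (hc ▸ h))
  | orI A B P ih =>
    simp only [concl, Finset.mem_insert, Finset.mem_erase, reduceCtorEq, false_or] at h
    exact ih hP.1 h.2.2
  | andI A B P Q ihP ihQ =>
    obtain ⟨hwP, hwQ, Γ, -, -, hcP, hcQ, -⟩ := hP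
    unfold invr
    split_ifs with hAB
    · exact NGraph.sub_union_right _ _
    · simp only [concl, hcP, Finset.mem_insert, Finset.mem_erase, NForm.and.injEq] at h
      exact (ihP hwP (by grind)).union (ihQ hwQ (by grind))

end GS4

/-- the axiom graph does not increase under isolation of a
non-atomic formula in the conclusion. -/
theorem GS4.axg_isl_sub {α : Type} (bar : α → α)
    (hbar : Function.Involutive bar) (hfix : ∀ a, bar a ≠ a)
    (P : GS4.Deriv α) (hP : GS4.WF bar P)
    (A : GS4.NForm α) (hA : A ∈ GS4.concl P) (hnonatom : ¬ A.isAtom) :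
    (GS4.axg (GS4.isl A P)).Sub (GS4.axg P) := by
  cases A with
  | atom x a => exact absurd trivial hnonatom
  | or D E => exact GS4.axg_inv_sub bar D E P hP hA
  | and D E =>
    exact GS4.NGraph.union_sub (GS4.axg_invl_sub bar D E P hP hA) (GS4.axg_invr_sub bar D E P hP hA)
end
end
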